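/- Let A be a commutative ring of prime characteristic p, let e ≥ 1 be an integer, and let f ∈ A[x]. Then f·D_{p^e}(f^{p^e - 1}) equals the sum over ℓ from 2 to p^e of (ℓ - 1)·D_ℓ(f)·D_{p^e - ℓ}(f^{p^e - 1}), where the coefficients ℓ - 1 are interpreted via the natural map ℤ → A. -/

import Mathlib

open Polynomial

theorem aux_coeff_torsionfree {R : Type*} [CommRing R] [IsDomain R] [CharZero R] (F : R[X])
    (m : ℕ) : (derivative F * F ^ m).coeff m = (F ^ (m + 1)).coeff (m + 1) := by
  have h := congrArg (fun P => P.coeff m) (derivative_pow_succ F m)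
  simp only [coeff_derivative] at h
  have hc : ((m : R) + 1) ≠ 0 := by exact_mod_cast Nat.succ_ne_zero m
  rw [mul_assoc, coeff_C_mul] at h
  apply mul_left_cancel₀ hc
  rw [mul_comm (derivative F), ← h, mul_comm]

theorem aux_coeff {R : Type*} [CommRing R] (F : R[X]) (m : ℕ) :
    (derivative F * F ^ m).coeff m = (F ^ (m + 1)).coeff (m + 1) := by
  let φ : MvPolynomial R ℤ →+* R := (MvPolynomial.aeval (id : R → R)).toRingHom
  have hφ : Function.Surjective φ := fun r => ⟨MvPolynomial.X r, by simp [φ]⟩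
  obtain ⟨G, rfl⟩ := Polynomial.map_surjective φ hφ F
  have h := congrArg φ (aux_coeff_torsionfree G m)
  rw [← coeff_map, ← coeff_map] at h
  simpa [Polynomial.map_mul, Polynomial.map_pow, derivative_map] using h

theorem aux_taylor {A : Type*} [CommRing A] (f : A[X]) (n : ℕ) :
    (taylor (X : A[X]) (f.map C)).coeff n = hasseDeriv n f := by
  have h : hasseDeriv n (f.map C) = (hasseDeriv n f).map C := by
    ext1 k
    simp [hasseDeriv_coeff]
  rw [taylor_coeff, h, eval_map, eval₂_C_X]

theorem aux_sum {A : Type*} [CommRing A] (f : A[X]) (m : ℕ) :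
    ∑ ℓ ∈ Finset.range (m + 1 + 1), ((ℓ : A[X]) - 1) * hasseDeriv ℓ f *
      hasseDeriv (m + 1 - ℓ) (f ^ m) = 0 := by
  set F := taylor (X : A[X]) (f.map C) with hF
  have hG : ∀ n, hasseDeriv n (f ^ m) = (F ^ m).coeff n := fun n => by
    rw [← aux_taylor, Polynomial.map_pow, taylor_pow]
  have h2 : ((X * derivative F - F) * F ^ m).coeff (m + 1) = 0 := by
    rw [sub_mul, coeff_sub, mul_assoc, coeff_X_mul, aux_coeff, pow_succ', sub_self]
  rw [coeff_mul, Finset.Nat.sum_antidiagonal_eq_sum_range_succ_mk] at h2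
  rw [← h2]
  refine Finset.sum_congr rfl fun ℓ _ => ?_
  rw [hG, ← aux_taylor f ℓ, ← hF]
  congr 1
  rw [coeff_sub]
  cases ℓ with
  | zero => simp
  | succ k => rw [coeff_X_mul, coeff_derivative]; push_cast; ring

/-- For a commutative ring `A` of prime characteristic `p`, `e ≥ 1` and `f ∈ A[x]`,
`f·D_{p^e}(f^{p^e-1}) = ∑_{ℓ=2}^{p^e} (ℓ-1)·D_ℓ(f)·D_{p^e-ℓ}(f^{p^e-1})`. -/
theorem mul_hasseDeriv_eq_sum (A : Type*) [CommRing A] (p : ℕ) [Fact p.Prime] [CharP A p]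
    (e : ℕ) (he : 1 ≤ e) (f : Polynomial A) :
    f * hasseDeriv (p ^ e) (f ^ (p ^ e - 1)) =
      ∑ ℓ ∈ Finset.Icc 2 (p ^ e),
        C ((((ℓ : ℤ) - 1) : ℤ) : A) * hasseDeriv ℓ f *
          hasseDeriv (p ^ e - ℓ) (f ^ (p ^ e - 1)) := by
  have hpos : 0 < p ^ e := pow_pos (Fact.out : p.Prime).pos e
  obtain ⟨m, hm⟩ : ∃ m, p ^ e = m + 1 := ⟨p ^ e - 1, by omega⟩
  rw [hm, Nat.add_sub_cancel]
  have h := aux_sum f m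
  rw [Finset.range_eq_Ico, Finset.sum_eq_sum_Ico_succ_bot (by omega),
    Finset.sum_eq_sum_Ico_succ_bot (by omega)] at h
  have hI : Finset.Icc 2 (m + 1) = Finset.Ico (0 + 1 + 1) (m + 1 + 1) := by
    ext; simp [Nat.lt_succ_iff]
  rw [hI]
  simp only [Nat.cast_zero, hasseDeriv_zero', Nat.sub_zero, zero_add, Nat.cast_one, sub_self,
    zero_mul] at h
  simp only [Int.cast_sub, Int.cast_natCast, Int.cast_one, map_sub, map_natCast, map_one, zero_add]
  linear_combination -h
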